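/- There exists a state ρ^{ABCD} of a quadripartite quantum system on finite-dimensional Hilbert spaces that saturates strong subadditivity for the triples ABC and CAB (i.e. I(A;C|B) = 0 and I(C;B|A) = 0) but satisfies I(C;D) = 0 and I(C;AB) = 1, so that I(C;D) < I(C;AB). One such state is ρ^{ABCD} = ½(|000⟩⟨000| + |111⟩⟨111|)^{ABC} ⊗ |0⟩⟨0|^D on four qubits. -/

import Mathlib

/-!
The witness is classical: it picks a fair coin `i` and prepares the basis state `|i, i, i, 0⟩`.
Every marginal of a mixture `∑ i, p i |f i⟩⟨f i|` of basis states is again such a mixture, along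
the coordinates of `f` that are kept. Where these coordinates still determine `i` the entropy is
the Shannon entropy of `p`, and where they are constant it vanishes. Hence `S(D) = 0`, and the
other entropies in the theorem are all equal to one bit.
-/

open scoped BigOperators ComplexOrder

/-- Von Neumann entropy (base 2) of a matrix: for a Hermitian matrix, the Shannon
entropy of its eigenvalues; junk value `0` for non-Hermitian matrices. -/
noncomputable def vNEntropy {n : Type*} [Fintype n] [DecidableEq n] (M : Matrix n n ℂ) : ℝ :=
  if h : M.IsHermitian then -∑ i, (h.eigenvalues i) * Real.logb 2 (h.eigenvalues i) else 0

/-- A density matrix: positive semidefinite with trace one. -/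
def IsState {n : Type*} [Fintype n] [DecidableEq n] (M : Matrix n n ℂ) : Prop :=
  M.PosSemidef ∧ M.trace = 1

section Quad

variable {A B C D : Type*} [Fintype A] [DecidableEq A] [Fintype B] [DecidableEq B]
  [Fintype C] [DecidableEq C] [Fintype D] [DecidableEq D]
  (ρ : Matrix (A × B × C × D) (A × B × C × D) ℂ)

/-- Entropies of the 15 marginals of a quadripartite state. -/
noncomputable def SA : ℝ :=
  vNEntropy (Matrix.of fun a a' : A => ∑ b, ∑ c, ∑ d, ρ (a, b, c, d) (a', b, c, d))
noncomputable def SB : ℝ :=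
  vNEntropy (Matrix.of fun b b' : B => ∑ a, ∑ c, ∑ d, ρ (a, b, c, d) (a, b', c, d))
noncomputable def SC : ℝ :=
  vNEntropy (Matrix.of fun c c' : C => ∑ a, ∑ b, ∑ d, ρ (a, b, c, d) (a, b, c', d))
noncomputable def SD : ℝ :=
  vNEntropy (Matrix.of fun d d' : D => ∑ a, ∑ b, ∑ c, ρ (a, b, c, d) (a, b, c, d'))
noncomputable def SAB : ℝ :=
  vNEntropy (Matrix.of fun p q : A × B => ∑ c, ∑ d, ρ (p.1, p.2, c, d) (q.1, q.2, c, d))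
noncomputable def SAC : ℝ :=
  vNEntropy (Matrix.of fun p q : A × C => ∑ b, ∑ d, ρ (p.1, b, p.2, d) (q.1, b, q.2, d))
noncomputable def SAD : ℝ :=
  vNEntropy (Matrix.of fun p q : A × D => ∑ b, ∑ c, ρ (p.1, b, c, p.2) (q.1, b, c, q.2))
noncomputable def SBC : ℝ :=
  vNEntropy (Matrix.of fun p q : B × C => ∑ a, ∑ d, ρ (a, p.1, p.2, d) (a, q.1, q.2, d))
noncomputable def SBD : ℝ :=
  vNEntropy (Matrix.of fun p q : B × D => ∑ a, ∑ c, ρ (a, p.1, c, p.2) (a, q.1, c, q.2))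
noncomputable def SCD : ℝ :=
  vNEntropy (Matrix.of fun p q : C × D => ∑ a, ∑ b, ρ (a, b, p.1, p.2) (a, b, q.1, q.2))
noncomputable def SABC : ℝ :=
  vNEntropy (Matrix.of fun p q : A × B × C =>
    ∑ d, ρ (p.1, p.2.1, p.2.2, d) (q.1, q.2.1, q.2.2, d))
noncomputable def SABD : ℝ :=
  vNEntropy (Matrix.of fun p q : A × B × D =>
    ∑ c, ρ (p.1, p.2.1, c, p.2.2) (q.1, q.2.1, c, q.2.2))
noncomputable def SACD : ℝ :=
  vNEntropy (Matrix.of fun p q : A × C × D =>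
    ∑ b, ρ (p.1, b, p.2.1, p.2.2) (q.1, b, q.2.1, q.2.2))
noncomputable def SBCD : ℝ :=
  vNEntropy (Matrix.of fun p q : B × C × D =>
    ∑ a, ρ (a, p.1, p.2.1, p.2.2) (a, q.1, q.2.1, q.2.2))
noncomputable def SABCD : ℝ := vNEntropy ρ

end Quad

theorem vNEntropy_diagonal {n : Type*} [Fintype n] [DecidableEq n] (d : n → ℝ) :
    vNEntropy (Matrix.diagonal fun x => (d x : ℂ)) = -∑ x, d x * Real.logb 2 (d x) := by
  have hherm : (Matrix.diagonal fun x => (d x : ℂ)).IsHermitian :=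
    Matrix.isHermitian_diagonal_iff.mpr fun x => Complex.conj_ofReal (d x)
  have hroots : Finset.univ.val.map (fun x => (d x : ℂ)) =
      Finset.univ.val.map (fun x => (hherm.eigenvalues x : ℂ)) := by
    have hne : ∏ x, (Polynomial.X - Polynomial.C (d x : ℂ)) ≠ 0 :=
      Finset.prod_ne_zero_iff.mpr fun x _ => Polynomial.X_sub_C_ne_zero _
    have hcharpoly := hherm.roots_charpoly_eq_eigenvalues
    rw [Matrix.charpoly_diagonal, Polynomial.roots_prod _ _ hne] at hcharpoly
    simpa only [Polynomial.roots_X_sub_C, Multiset.bind_singleton, Function.comp_def,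
      RCLike.ofReal_eq_complex_ofReal] using hcharpoly
  have hspec : Finset.univ.val.map d = Finset.univ.val.map hherm.eigenvalues := by
    simpa only [Multiset.map_map, Function.comp_def, Complex.ofReal_re] using
      congrArg (Multiset.map Complex.re) hroots
  have hsum := congrArg (fun s => (s.map fun t => t * Real.logb 2 t).sum) hspec
  simp only [Multiset.map_map, Function.comp_def] at hsum
  rw [vNEntropy, dif_pos hherm]
  exact congrArg Neg.neg hsum.symm

/-- The classical mixture `∑ i, p i |f i⟩⟨f i|` of computational basis states: the state prepared
by drawing `i` with probability `p i` and outputting the basis vector `f i`. Distinct `i` may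
give the same basis vector, so that discarding a subsystem amounts to composing `f` with a
projection. -/
noncomputable def basisMixture {k n : Type*} [Fintype k] [DecidableEq n] (p : k → ℝ) (f : k → n) :
    Matrix n n ℂ :=
  ∑ i, Matrix.single (f i) (f i) (p i : ℂ)

section BasisMixture

variable {k n : Type*} [Fintype k] [DecidableEq n]

theorem basisMixture_apply (p : k → ℝ) (f : k → n) (x y : n) :
    basisMixture p f x y = ∑ i, if f i = x ∧ f i = y then (p i : ℂ) else 0 := by
  simp only [basisMixture, Matrix.sum_apply, Matrix.single_apply]

theorem basisMixture_eq_diagonal (p : k → ℝ) (f : k → n) :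
    basisMixture p f = Matrix.diagonal fun x => ((∑ i, if f i = x then p i else 0 : ℝ) : ℂ) := by
  ext x y
  rw [basisMixture_apply, Matrix.diagonal_apply]
  split_ifs with hxy
  · simp only [hxy, and_self, Complex.ofReal_sum, apply_ite, Complex.ofReal_zero]
  · exact Finset.sum_eq_zero fun i _ => if_neg fun h => hxy (h.1.symm.trans h.2)

theorem basisMixture_const (p : k → ℝ) (x : n) :
    basisMixture p (fun _ => x) = basisMixture (fun _ : Unit => ∑ i, p i) fun _ => x := by
  ext y z
  by_cases hx : x = y ∧ x = z <;> simp [basisMixture_apply, hx]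

variable [Fintype n]

theorem isState_basisMixture {p : k → ℝ} (hp : ∀ i, 0 ≤ p i) (hsum : ∑ i, p i = 1) (f : k → n) :
    IsState (basisMixture p f) := by
  constructor
  · rw [basisMixture_eq_diagonal, Matrix.posSemidef_diagonal_iff]
    exact fun x => Complex.zero_le_real.mpr <|
      Finset.sum_nonneg fun i _ => ite_nonneg (hp i) le_rfl
  · simp only [basisMixture, Matrix.trace_sum, Matrix.trace_single_eq_same]
    exact_mod_cast hsum

theorem vNEntropy_basisMixture_of_injective (p : k → ℝ) {f : k → n}
    (hf : Function.Injective f) :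
    vNEntropy (basisMixture p f) = -∑ i, p i * Real.logb 2 (p i) := by
  classical
  rw [basisMixture_eq_diagonal, vNEntropy_diagonal, neg_inj]
  refine (Fintype.sum_of_injective f hf _ _ (fun x hx => ?_) fun i => ?_).symm
  · have hzero : ∀ i, f i ≠ x := fun i hi => hx ⟨i, hi⟩
    simp [hzero]
  · simp [hf.eq_iff]

theorem vNEntropy_basisMixture_uniform {f : k → n} (hf : Function.Injective f) :
    vNEntropy (basisMixture (fun _ => (Fintype.card k : ℝ)⁻¹) f) =
      Real.logb 2 (Fintype.card k) := by
  rw [vNEntropy_basisMixture_of_injective _ hf]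
  rcases isEmpty_or_nonempty k with _ | _
  · simp
  · simp [Real.logb_inv]

theorem vNEntropy_basisMixture_fairCoin {f : Fin 2 → n} (hf : Function.Injective f) :
    vNEntropy (basisMixture (fun _ => 1 / 2) f) = 1 := by
  simpa using vNEntropy_basisMixture_uniform hf

theorem vNEntropy_basisMixture_const {p : k → ℝ} (hsum : ∑ i, p i = 1) (x : n) :
    vNEntropy (basisMixture p fun _ => x) = 0 := by
  rw [basisMixture_const, vNEntropy_basisMixture_of_injective _
    (Function.injective_of_subsingleton _)]
  simp [hsum]

end BasisMixture

/-- The partial trace of `ρ` over a subsystem `Y`, i.e. its marginal on `X`. The equivalence `e`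
splits each basis label of the whole system into a label of `X` and a label of `Y`. -/
def partialTrace {R n X Y : Type*} [AddCommMonoid R] [Fintype Y] (e : n ≃ X × Y)
    (ρ : Matrix n n R) : Matrix X X R :=
  Matrix.of fun x x' => ∑ y, ρ (e.symm (x, y)) (e.symm (x', y))

theorem partialTrace_basisMixture {k n X Y : Type*} [Fintype k] [DecidableEq n] [DecidableEq X]
    [Fintype Y] (e : n ≃ X × Y) (p : k → ℝ) (f : k → n) :
    partialTrace e (basisMixture p f) = basisMixture p fun i => (e (f i)).1 := by
  classical
  ext x x'
  simp only [partialTrace, Matrix.of_apply, basisMixture_apply, Equiv.eq_symm_apply]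
  rw [Finset.sum_comm]
  refine Finset.sum_congr rfl fun i _ => ?_
  have hsplit : ∀ y, (e (f i) = (x, y) ∧ e (f i) = (x', y)) ↔
      (e (f i)).2 = y ∧ (e (f i)).1 = x ∧ (e (f i)).1 = x' := by
    grind
  simp only [hsplit, ite_and, Finset.sum_ite_eq, Finset.mem_univ, if_true]

section Marginals

variable {k A B C D : Type*} [Fintype k] [Fintype A] [DecidableEq A] [Fintype B] [DecidableEq B]
  [Fintype C] [DecidableEq C] [Fintype D] [DecidableEq D] (p : k → ℝ) (f : k → A × B × C × D)

theorem SA_basisMixture :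
    SA (basisMixture p f) = vNEntropy (basisMixture p fun i => (f i).1) := by
  let e : A × B × C × D ≃ A × B × C × D := Equiv.refl _
  refine congrArg vNEntropy (Eq.trans ?_ (partialTrace_basisMixture e p f))
  simp only [partialTrace, Fintype.sum_prod_type]
  rfl

theorem SB_basisMixture :
    SB (basisMixture p f) = vNEntropy (basisMixture p fun i => (f i).2.1) := by
  let e : A × B × C × D ≃ B × A × C × D :=
    ⟨fun (a, b, c, d) => (b, a, c, d),
      fun (b, a, c, d) => (a, b, c, d), fun _ => rfl, fun _ => rfl⟩
  refine congrArg vNEntropy (Eq.trans ?_ (partialTrace_basisMixture e p f))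
  simp only [partialTrace, Fintype.sum_prod_type]
  rfl

theorem SC_basisMixture :
    SC (basisMixture p f) = vNEntropy (basisMixture p fun i => (f i).2.2.1) := by
  let e : A × B × C × D ≃ C × A × B × D :=
    ⟨fun (a, b, c, d) => (c, a, b, d),
      fun (c, a, b, d) => (a, b, c, d), fun _ => rfl, fun _ => rfl⟩
  refine congrArg vNEntropy (Eq.trans ?_ (partialTrace_basisMixture e p f))
  simp only [partialTrace, Fintype.sum_prod_type]
  rfl

theorem SD_basisMixture :
    SD (basisMixture p f) = vNEntropy (basisMixture p fun i => (f i).2.2.2) := by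
  let e : A × B × C × D ≃ D × A × B × C :=
    ⟨fun (a, b, c, d) => (d, a, b, c),
      fun (d, a, b, c) => (a, b, c, d), fun _ => rfl, fun _ => rfl⟩
  refine congrArg vNEntropy (Eq.trans ?_ (partialTrace_basisMixture e p f))
  simp only [partialTrace, Fintype.sum_prod_type]
  rfl

theorem SAB_basisMixture :
    SAB (basisMixture p f) = vNEntropy (basisMixture p fun i => ((f i).1, (f i).2.1)) := by
  let e : A × B × C × D ≃ (A × B) × C × D := (Equiv.prodAssoc A B (C × D)).symm
  refine congrArg vNEntropy (Eq.trans ?_ (partialTrace_basisMixture e p f))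
  simp only [partialTrace, Fintype.sum_prod_type]
  rfl

theorem SAC_basisMixture :
    SAC (basisMixture p f) = vNEntropy (basisMixture p fun i => ((f i).1, (f i).2.2.1)) := by
  let e : A × B × C × D ≃ (A × C) × B × D :=
    ⟨fun (a, b, c, d) => ((a, c), b, d),
      fun ((a, c), b, d) => (a, b, c, d), fun _ => rfl, fun _ => rfl⟩
  refine congrArg vNEntropy (Eq.trans ?_ (partialTrace_basisMixture e p f))
  simp only [partialTrace, Fintype.sum_prod_type]
  rfl

theorem SBC_basisMixture :
    SBC (basisMixture p f) = vNEntropy (basisMixture p fun i => ((f i).2.1, (f i).2.2.1)) := by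
  let e : A × B × C × D ≃ (B × C) × A × D :=
    ⟨fun (a, b, c, d) => ((b, c), a, d),
      fun ((b, c), a, d) => (a, b, c, d), fun _ => rfl, fun _ => rfl⟩
  refine congrArg vNEntropy (Eq.trans ?_ (partialTrace_basisMixture e p f))
  simp only [partialTrace, Fintype.sum_prod_type]
  rfl

theorem SCD_basisMixture :
    SCD (basisMixture p f) = vNEntropy (basisMixture p fun i => ((f i).2.2.1, (f i).2.2.2)) := by
  let e : A × B × C × D ≃ (C × D) × A × B :=
    ⟨fun (a, b, c, d) => ((c, d), a, b),
      fun ((c, d), a, b) => (a, b, c, d), fun _ => rfl, fun _ => rfl⟩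
  refine congrArg vNEntropy (Eq.trans ?_ (partialTrace_basisMixture e p f))
  simp only [partialTrace, Fintype.sum_prod_type]
  rfl

theorem SABC_basisMixture :
    SABC (basisMixture p f) =
      vNEntropy (basisMixture p fun i => ((f i).1, (f i).2.1, (f i).2.2.1)) := by
  let e : A × B × C × D ≃ (A × B × C) × D :=
    ⟨fun (a, b, c, d) => ((a, b, c), d),
      fun ((a, b, c), d) => (a, b, c, d), fun _ => rfl, fun _ => rfl⟩
  exact congrArg vNEntropy (partialTrace_basisMixture e p f)

end Marginals

/-- The four-qubit state `½(|000⟩⟨000| + |111⟩⟨111|) ⊗ |0⟩⟨0|`: the fully dephased GHZ state on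
`ABC` together with a pure qubit `D`. -/
noncomputable def dephasedGHZ :
    Matrix (Fin 2 × Fin 2 × Fin 2 × Fin 2) (Fin 2 × Fin 2 × Fin 2 × Fin 2) ℂ :=
  basisMixture (fun _ : Fin 2 => 1 / 2) fun i => (i, i, i, 0)

theorem dephasedGHZ_eq_of :
    dephasedGHZ = Matrix.of fun p q : Fin 2 × Fin 2 × Fin 2 × Fin 2 =>
      if p = q ∧ p.2.2.2 = 0 ∧ p.1 = p.2.1 ∧ p.2.1 = p.2.2.1 then (1 / 2 : ℂ) else 0 := by
  ext ⟨a, b, c, d⟩ q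
  have hsupport : ∀ i : Fin 2, ((i, i, i, 0) = (a, b, c, d) ∧ (i, i, i, 0) = q) ↔
      i = a ∧ (a, b, c, d) = q ∧ d = 0 ∧ a = b ∧ b = c := by
    grind
  simp only [dephasedGHZ, basisMixture_apply, hsupport, ite_and, Finset.sum_ite_eq',
    Finset.mem_univ, if_true, Matrix.of_apply]
  norm_num

theorem isState_dephasedGHZ : IsState dephasedGHZ :=
  isState_basisMixture (fun _ => by norm_num) (by norm_num) _

theorem SA_dephasedGHZ : SA dephasedGHZ = 1 :=
  (SA_basisMixture _ _).trans (vNEntropy_basisMixture_fairCoin Function.injective_id)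

theorem SB_dephasedGHZ : SB dephasedGHZ = 1 :=
  (SB_basisMixture _ _).trans (vNEntropy_basisMixture_fairCoin Function.injective_id)

theorem SC_dephasedGHZ : SC dephasedGHZ = 1 :=
  (SC_basisMixture _ _).trans (vNEntropy_basisMixture_fairCoin Function.injective_id)

theorem SD_dephasedGHZ : SD dephasedGHZ = 0 :=
  (SD_basisMixture _ _).trans (vNEntropy_basisMixture_const (by norm_num) 0)

theorem SAB_dephasedGHZ : SAB dephasedGHZ = 1 :=
  (SAB_basisMixture _ _).trans (vNEntropy_basisMixture_fairCoin fun _ _ h => congrArg Prod.fst h)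

theorem SAC_dephasedGHZ : SAC dephasedGHZ = 1 :=
  (SAC_basisMixture _ _).trans (vNEntropy_basisMixture_fairCoin fun _ _ h => congrArg Prod.fst h)

theorem SBC_dephasedGHZ : SBC dephasedGHZ = 1 :=
  (SBC_basisMixture _ _).trans (vNEntropy_basisMixture_fairCoin fun _ _ h => congrArg Prod.fst h)

theorem SCD_dephasedGHZ : SCD dephasedGHZ = 1 :=
  (SCD_basisMixture _ _).trans (vNEntropy_basisMixture_fairCoin fun _ _ h => congrArg Prod.fst h)

theorem SABC_dephasedGHZ : SABC dephasedGHZ = 1 :=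
  (SABC_basisMixture _ _).trans (vNEntropy_basisMixture_fairCoin fun _ _ h => congrArg Prod.fst h)

/-- **Remark (necessity of the third constraint).** There is a four-qubit state
saturating strong subadditivity for the triples `ABC` and `CAB`
(`I(A;C|B) = 0` and `I(C;B|A) = 0`), yet with `I(C;D) = 0` and `I(C;AB) = 1`,
hence `I(C;D) < I(C;AB)`.  Witness:
`ρ = ½(|000⟩⟨000| + |111⟩⟨111|)^{ABC} ⊗ |0⟩⟨0|^D`. -/
theorem counterexample_two_constraints_ABC_CAB :
    ∃ ρ : Matrix (Fin 2 × Fin 2 × Fin 2 × Fin 2) (Fin 2 × Fin 2 × Fin 2 × Fin 2) ℂ,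
      ρ = (Matrix.of fun p q : Fin 2 × Fin 2 × Fin 2 × Fin 2 =>
            if p = q ∧ p.2.2.2 = 0 ∧ p.1 = p.2.1 ∧ p.2.1 = p.2.2.1
            then (1 / 2 : ℂ) else 0) ∧
      IsState ρ ∧
      SAB ρ + SBC ρ - SABC ρ - SB ρ = 0 ∧
      SAC ρ + SAB ρ - SABC ρ - SA ρ = 0 ∧
      SC ρ + SD ρ - SCD ρ = 0 ∧
      SC ρ + SAB ρ - SABC ρ = 1 ∧
      SC ρ + SD ρ - SCD ρ < SC ρ + SAB ρ - SABC ρ := by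
  refine ⟨dephasedGHZ, dephasedGHZ_eq_of, isState_dephasedGHZ, ?_⟩
  rw [SA_dephasedGHZ, SB_dephasedGHZ, SC_dephasedGHZ, SD_dephasedGHZ, SAB_dephasedGHZ,
    SAC_dephasedGHZ, SBC_dephasedGHZ, SCD_dephasedGHZ, SABC_dephasedGHZ]
  norm_num
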